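/- arXiv:2512.14403 — 4 statements merged into one kernel-verified Lean document; each statement's English description precedes it below -/
import Mathlib

section
/- For any finite, non-empty sets X, Y ⊂ ℤ^d, one has |X + Y + {0,1}^d|^{1/d} ≥ |X|^{1/d} + |Y|^{1/d}. -/
/-!
Thickening each lattice point `x` to the half-open unit cube `x + [0,1)^d` turns cardinality into
Lebesgue measure: if `A`, `B` are the thickenings of `X`, `Y`, then `A + B` lies in the thickening
of `X + Y + {0,1}^d`, since `⌊a + b⌋ - ⌊a⌋ - ⌊b⌋ ∈ {0,1}` in every coordinate. The claim is
therefore a case of the Brunn–Minkowski inequality for finite disjoint unions of half-open boxes.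

That inequality (`brunnMinkowski_boxes`) is proved by the Hadwiger–Ohmann induction on the total
number of boxes. For two single boxes it is the AM–GM inequality (`prod_rpow_add_le`). If `A` has
at least two boxes, a coordinate hyperplane separates two of them (`IsBoxUnion.exists_split`), so
both halves of `A` have fewer boxes. A parallel hyperplane cuts `B` in the same volume ratio
(`IsBoxUnion.exists_cut`) without creating boxes. The two sums of corresponding halves lie on
opposite sides of a hyperplane, and adding the two inequalities given by induction yields the one
for `A` and `B` because both sides are homogeneous (`brunnMinkowski_step`).
-/

open Pointwise

/-! ### Boxes and hyperplane cuts -/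

/-- The half-open box `∏ k, [l k, u k)`; it is empty when `u k ≤ l k` for some `k`. -/
def box {d : ℕ} (l u : Fin d → ℝ) : Set (Fin d → ℝ) :=
  {x | ∀ k, l k ≤ x k ∧ x k < u k}

/-- `A` is a disjoint union of at most `n` nonempty half-open boxes, indexed by a finite subset
of `ι`. -/
def IsBoxUnion {d : ℕ} (ι : Type) (n : ℕ) (A : Set (Fin d → ℝ)) : Prop :=
  ∃ (s : Finset ι) (l u : ι → Fin d → ℝ), s.card ≤ n ∧
    (∀ i ∈ s, (box (l i) (u i)).Nonempty) ∧
    (s : Set ι).PairwiseDisjoint (fun i => box (l i) (u i)) ∧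
    A = ⋃ i ∈ s, box (l i) (u i)

/-- The open half-space `{x | x k < t}`. -/
def below {d : ℕ} (k : Fin d) (t : ℝ) : Set (Fin d → ℝ) := {x | x k < t}

section Boxes

open MeasureTheory

variable {d : ℕ} {ι : Type}

lemma box_eq_pi (l u : Fin d → ℝ) : box l u = Set.univ.pi fun k => Set.Ico (l k) (u k) := by
  ext x; simp [box, Set.mem_pi]

lemma measurableSet_box (l u : Fin d → ℝ) : MeasurableSet (box l u) := by
  rw [box_eq_pi]; exact MeasurableSet.univ_pi fun k => measurableSet_Ico

lemma measurableSet_below (k : Fin d) (t : ℝ) : MeasurableSet (below k t) :=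
  measurableSet_lt (measurable_pi_apply k) measurable_const

lemma volume_box (l u : Fin d → ℝ) :
    volume.real (box l u) = ∏ k, max (u k - l k) 0 := by
  rw [box_eq_pi, Measure.real, Real.volume_pi_Ico, ENNReal.toReal_prod]
  simp [ENNReal.toReal_ofReal']

lemma isBounded_box (l u : Fin d → ℝ) : Bornology.IsBounded (box l u) :=
  (Metric.isBounded_Icc l u).subset fun _ hx => ⟨fun k => (hx k).1, fun k => (hx k).2.le⟩

lemma volume_box_pos {l u : Fin d → ℝ} (h : (box l u).Nonempty) : 0 < volume.real (box l u) := by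
  obtain ⟨x, hx⟩ := h
  rw [volume_box]
  exact Finset.prod_pos fun k _ => lt_max_of_lt_left (by linarith [(hx k).1, (hx k).2])

lemma box_inter_below (l u : Fin d → ℝ) (k : Fin d) (t : ℝ) :
    box l u ∩ below k t = box l (Function.update u k (min (u k) t)) := by
  ext x
  simp only [box, below, Set.mem_inter_iff, Set.mem_ofPred_eq]
  constructor
  · rintro ⟨h, ht⟩ j
    by_cases hj : j = k
    · subst hj; simpa using ⟨(h j).1, (h j).2, ht⟩
    · simpa [hj] using h j
  · intro h
    have hk := h k
    simp only [Function.update_self, lt_min_iff] at hk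
    refine ⟨fun j => ?_, hk.2.2⟩
    by_cases hj : j = k
    · subst hj; exact ⟨hk.1, hk.2.1⟩
    · simpa [hj] using h j

lemma box_inter_compl_below (l u : Fin d → ℝ) (k : Fin d) (t : ℝ) :
    box l u ∩ (below k t)ᶜ = box (Function.update l k (max (l k) t)) u := by
  ext x
  simp only [box, below, Set.mem_inter_iff, Set.mem_ofPred_eq, Set.mem_compl_iff, not_lt]
  constructor
  · rintro ⟨h, ht⟩ j
    by_cases hj : j = k
    · subst hj; simpa using ⟨⟨(h j).1, ht⟩, (h j).2⟩
    · simpa [hj] using h j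
  · intro h
    have hk := h k
    simp only [Function.update_self, max_le_iff] at hk
    refine ⟨fun j => ?_, hk.1.2⟩
    by_cases hj : j = k
    · subst hj; exact ⟨hk.1.1, hk.2⟩
    · simpa [hj] using h j

namespace IsBoxUnion

variable {n : ℕ} {A : Set (Fin d → ℝ)}

lemma measurableSet (h : IsBoxUnion ι n A) : MeasurableSet A := by
  obtain ⟨s, l, u, -, -, -, rfl⟩ := h
  exact Finset.measurableSet_biUnion _ fun i _ => measurableSet_box _ _

lemma isBounded (h : IsBoxUnion ι n A) : Bornology.IsBounded A := by
  obtain ⟨s, l, u, -, -, -, rfl⟩ := h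
  exact (Bornology.isBounded_biUnion_finset s).2 fun i _ => isBounded_box _ _

lemma volume_pos (h : IsBoxUnion ι n A) (hA : A.Nonempty) : 0 < volume.real A := by
  have hb := h.isBounded
  obtain ⟨s, l, u, -, hne, -, rfl⟩ := h
  obtain ⟨x, hx⟩ := hA
  simp only [Set.mem_iUnion, exists_prop] at hx
  obtain ⟨i, hi, -⟩ := hx
  exact (volume_box_pos (hne i hi)).trans_le
    (measureReal_mono (Set.subset_biUnion_of_mem (u := fun i => box (l i) (u i)) hi)
      hb.measure_lt_top.ne)

end IsBoxUnion

/-- Intersecting every box with `H` keeps a box union, provided each box meets `H` in a box; only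
the boxes meeting `H` have to be counted. -/
lemma isBoxUnion_inter {n : ℕ} {s : Finset ι} {l u l' u' : ι → Fin d → ℝ}
    {H : Set (Fin d → ℝ)} {t : Finset ι} (hts : t ⊆ s) (htn : t.card ≤ n)
    (ht : ∀ i ∈ s, (box (l i) (u i) ∩ H).Nonempty → i ∈ t)
    (hdisj : (s : Set ι).PairwiseDisjoint (fun i => box (l i) (u i)))
    (hH : ∀ i, box (l i) (u i) ∩ H = box (l' i) (u' i)) :
    IsBoxUnion ι n ((⋃ i ∈ s, box (l i) (u i)) ∩ H) := by
  classical
  refine ⟨t.filter fun i => (box (l i) (u i) ∩ H).Nonempty, l', u',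
    (Finset.card_filter_le _ _).trans htn, ?_, ?_, ?_⟩
  · intro i hi
    rw [← hH]; exact (Finset.mem_filter.1 hi).2
  · intro i hi j hj hij
    have hi' := hts (Finset.mem_filter.1 hi).1
    have hj' := hts (Finset.mem_filter.1 hj).1
    change Disjoint (box (l' i) (u' i)) (box (l' j) (u' j))
    rw [← hH, ← hH]
    exact (hdisj hi' hj' hij).mono Set.inter_subset_left Set.inter_subset_left
  · ext x
    simp only [Set.mem_inter_iff, Set.mem_iUnion, exists_prop, Finset.mem_filter, ← hH]
    constructor
    · rintro ⟨⟨i, hi, hx⟩, hxH⟩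
      exact ⟨i, ⟨ht i hi ⟨x, hx, hxH⟩, ⟨x, hx, hxH⟩⟩, hx, hxH⟩
    · rintro ⟨i, ⟨hi, -⟩, hx, hxH⟩
      exact ⟨⟨i, hts hi, hx⟩, hxH⟩

namespace IsBoxUnion

variable {n : ℕ} {A : Set (Fin d → ℝ)}

lemma inter_below (h : IsBoxUnion ι n A) (k : Fin d) (t : ℝ) :
    IsBoxUnion ι n (A ∩ below k t) := by
  obtain ⟨s, l, u, hn, hne, hd, rfl⟩ := h
  exact isBoxUnion_inter subset_rfl hn (fun i hi _ => hi) hd fun i => box_inter_below _ _ k t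

lemma inter_compl_below (h : IsBoxUnion ι n A) (k : Fin d) (t : ℝ) :
    IsBoxUnion ι n (A ∩ (below k t)ᶜ) := by
  obtain ⟨s, l, u, hn, hne, hd, rfl⟩ := h
  exact isBoxUnion_inter subset_rfl hn (fun i hi _ => hi) hd
    fun i => box_inter_compl_below _ _ k t

lemma volume_split (h : IsBoxUnion ι n A) (k : Fin d) (t : ℝ) :
    volume.real (A ∩ below k t) + volume.real (A ∩ (below k t)ᶜ) = volume.real A := by
  rw [← Set.sdiff_eq]
  exact measureReal_inter_add_sdiff (measurableSet_below k t) h.isBounded.measure_lt_top.ne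

/-- A hyperplane orthogonal to the `k`-th axis cuts a box union in any prescribed volume ratio, by
the intermediate value theorem. -/
lemma exists_cut (h : IsBoxUnion ι n A) (k : Fin d) {c : ℝ} (hc0 : 0 ≤ c)
    (hc : c ≤ volume.real A) : ∃ t, volume.real (A ∩ below k t) = c := by
  have hcont : Continuous fun t => volume.real (A ∩ below k t) := by
    obtain ⟨s, l, u, -, hne, hd, rfl⟩ := h
    have : ∀ t, volume.real ((⋃ i ∈ s, box (l i) (u i)) ∩ below k t) =
        ∑ i ∈ s, ∏ j, max (Function.update (u i) k (min (u i k) t) j - l i j) 0 := by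
      intro t
      rw [Set.iUnion₂_inter, measureReal_biUnion_finset ?_ ?_ ?_]
      · simp only [box_inter_below, volume_box]
      · intro i hi j hj hij
        exact (hd hi hj hij).mono Set.inter_subset_left Set.inter_subset_left
      · intro i _
        exact (measurableSet_box _ _).inter (measurableSet_below k t)
      · intro i _
        exact ((isBounded_box _ _).subset Set.inter_subset_left).measure_lt_top.ne
    simp only [this]
    refine continuous_finsetSum _ fun i _ => continuous_finsetProd _ fun j _ => ?_
    by_cases hj : j = k
    · subst hj; simp only [Function.update_self]; fun_prop
    · simp only [Function.update_of_ne hj]; fun_prop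
  obtain ⟨R, hR⟩ := h.isBounded.subset_closedBall 0
  have hA : ∀ x ∈ A, |x k| ≤ R := fun x hx => by
    have h1 := hR hx
    rw [mem_closedBall_zero_iff] at h1
    exact (norm_le_pi_norm x k).trans h1
  have h0 : volume.real (A ∩ below k (-R)) = 0 := by
    have : A ∩ below k (-R) = ∅ := by
      ext x
      simp only [below, Set.mem_inter_iff, Set.mem_ofPred_eq, Set.mem_empty_iff_false, iff_false]
      rintro ⟨hx, h2⟩
      linarith [(abs_le.1 (hA x hx)).1]
    simp [this]
  have h1 : volume.real (A ∩ below k (R + 1)) = volume.real A := by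
    rw [Set.inter_eq_left.2]
    intro x hx
    show x k < R + 1
    linarith [(abs_le.1 (hA x hx)).2]
  exact mem_range_of_exists_le_of_exists_ge hcont ⟨-R, by simpa [h0] using hc0⟩
    ⟨R + 1, by simpa [h1] using hc⟩

/-- A box union that is not a single box can be cut by a coordinate hyperplane into two nonempty
pieces, each made of fewer boxes: two disjoint boxes have disjoint projections to some axis. -/
lemma exists_split (h : IsBoxUnion ι n A) (hA : A.Nonempty) :
    (∃ l u, A = box l u) ∨ ∃ k t, ∃ m < n,
      IsBoxUnion ι m (A ∩ below k t) ∧ IsBoxUnion ι m (A ∩ (below k t)ᶜ) ∧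
      (A ∩ below k t).Nonempty ∧ (A ∩ (below k t)ᶜ).Nonempty := by
  classical
  obtain ⟨s, l, u, hn, hne, hd, rfl⟩ := h
  obtain ⟨x, hx⟩ := hA
  simp only [Set.mem_iUnion, exists_prop] at hx
  obtain ⟨i, hi, hxi⟩ := hx
  by_cases hs : ∀ j ∈ s, j = i
  · left
    refine ⟨l i, u i, ?_⟩
    have : s = {i} := Finset.eq_singleton_iff_unique_mem.2 ⟨hi, hs⟩
    subst this
    simp
  · right
    push Not at hs
    obtain ⟨j, hj, hji⟩ := hs
    -- a coordinate in which one box lies entirely to the left of the other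
    have key : ∃ k, ∃ p ∈ s, ∃ q ∈ s, u p k ≤ l q k := by
      by_contra! hcon
      refine (hd hi hj (Ne.symm hji)).notMem_of_mem_left
        (a := fun k => max (l i k) (l j k)) ?_ ?_
      all_goals
        obtain ⟨y, hy⟩ := hne i hi
        obtain ⟨z, hz⟩ := hne j hj
        intro k
        have h1 := hcon k i hi j hj
        have h2 := hcon k j hj i hi
        have h3 := hy k
        have h4 := hz k
        constructor
        · simp
        · apply max_lt <;> linarith
    obtain ⟨k, p, hp, q, hq, hpq⟩ := key
    obtain ⟨y, hy⟩ := hne p hp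
    obtain ⟨z, hz⟩ := hne q hq
    have hspos : 0 < s.card := Finset.card_pos.2 ⟨p, hp⟩
    refine ⟨k, l q k, s.card - 1, by omega, ?_, ?_, ?_, ?_⟩
    · refine isBoxUnion_inter (Finset.erase_subset q s) (Finset.card_erase_of_mem hq).le ?_ hd
        fun i => box_inter_below _ _ k _
      rintro a ha ⟨w, hw, hw'⟩
      refine Finset.mem_erase.2 ⟨?_, ha⟩
      rintro rfl
      exact absurd (hw k).1 (not_le.2 hw')
    · refine isBoxUnion_inter (Finset.erase_subset p s) (Finset.card_erase_of_mem hp).le ?_ hd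
        fun i => box_inter_compl_below _ _ k _
      rintro a ha ⟨w, hw, hw'⟩
      refine Finset.mem_erase.2 ⟨?_, ha⟩
      rintro rfl
      exact hw' ((hw k).2.trans_le hpq)
    · exact ⟨y, Set.mem_biUnion (t := fun i => box (l i) (u i)) hp hy, (hy k).2.trans_le hpq⟩
    · exact ⟨z, Set.mem_biUnion (t := fun i => box (l i) (u i)) hq hz, not_lt.2 (hz k).1⟩

end IsBoxUnion

/-! ### The Brunn–Minkowski inequality for unions of boxes -/

/-- Superadditivity of the geometric mean, which is Brunn–Minkowski for two boxes with side lengths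
`a k` and `b k`. It follows from AM–GM for the ratios `a k / (a k + b k)` and
`b k / (a k + b k)`, which add up to `1`. -/
lemma prod_rpow_add_le (hd : 0 < d) {a b : Fin d → ℝ} (ha : ∀ k, 0 < a k) (hb : ∀ k, 0 < b k) :
    ((∏ k, a k) ^ ((d : ℝ)⁻¹) + (∏ k, b k) ^ ((d : ℝ)⁻¹)) ^ d ≤ ∏ k, (a k + b k) := by
  have hd' : (d : ℝ) ≠ 0 := by positivity
  have hab : ∀ k, 0 < a k + b k := fun k => add_pos (ha k) (hb k)
  have amgm : ∀ c : Fin d → ℝ, (∀ k, 0 < c k) →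
      (∏ k, c k) ^ ((d : ℝ)⁻¹) ≤
        (∏ k, (a k + b k)) ^ ((d : ℝ)⁻¹) * ∑ k, (d : ℝ)⁻¹ * (c k / (a k + b k)) := by
    intro c hc
    have h1 := Real.geom_mean_le_arith_mean_weighted Finset.univ (fun _ : Fin d => (d : ℝ)⁻¹)
      (fun k => c k / (a k + b k)) (fun _ _ => by positivity) (by simp [hd'])
      (fun k _ => (div_pos (hc k) (hab k)).le)
    rw [Real.finsetProd_rpow _ _ fun k _ => (div_pos (hc k) (hab k)).le,
      Finset.prod_div_distrib, Real.div_rpow (Finset.prod_nonneg fun k _ => (hc k).le)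
      (Finset.prod_nonneg fun k _ => (hab k).le), div_le_iff₀ (Real.rpow_pos_of_pos
      (Finset.prod_pos fun k _ => hab k) _)] at h1
    rwa [mul_comm]
  have hsum : ∑ k, (d : ℝ)⁻¹ * (a k / (a k + b k)) + ∑ k, (d : ℝ)⁻¹ * (b k / (a k + b k)) = 1 := by
    rw [← Finset.sum_add_distrib]
    have : ∀ k, (d : ℝ)⁻¹ * (a k / (a k + b k)) + (d : ℝ)⁻¹ * (b k / (a k + b k)) =
        (d : ℝ)⁻¹ := fun k => by
      have := (hab k).ne'
      field_simp
    simp [this, hd']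
  have h : (∏ k, a k) ^ ((d : ℝ)⁻¹) + (∏ k, b k) ^ ((d : ℝ)⁻¹) ≤
      (∏ k, (a k + b k)) ^ ((d : ℝ)⁻¹) := by
    have := add_le_add (amgm a ha) (amgm b hb)
    rwa [← mul_add, hsum, mul_one] at this
  calc _ ≤ ((∏ k, (a k + b k)) ^ ((d : ℝ)⁻¹)) ^ d := by
        refine pow_le_pow_left₀ (add_nonneg ?_ ?_) h d
        · exact Real.rpow_nonneg (Finset.prod_nonneg fun k _ => (ha k).le) _
        · exact Real.rpow_nonneg (Finset.prod_nonneg fun k _ => (hb k).le) _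
    _ = _ := Real.rpow_inv_natCast_pow (Finset.prod_nonneg fun k _ => (hab k).le) hd.ne'

lemma box_add_subset {l u l' u' : Fin d → ℝ} (h : ∀ k, l k < u k) (h' : ∀ k, l' k < u' k) :
    box (l + l') (u + u') ⊆ box l u + box l' u' := by
  intro z hz
  -- split the offset of `z` from the lower corner proportionally to the side lengths
  set r : Fin d → ℝ := fun k => (z k - (l k + l' k)) / ((u k - l k) + (u' k - l' k)) with hr
  have hr0 : ∀ k, 0 ≤ r k ∧ r k < 1 := fun k => by
    have h1 := hz k
    simp only [Pi.add_apply] at h1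
    have hpos : 0 < (u k - l k) + (u' k - l' k) := by linarith [h k, h' k]
    exact ⟨div_nonneg (by linarith) hpos.le, (div_lt_one hpos).2 (by linarith)⟩
  refine ⟨fun k => l k + r k * (u k - l k), fun k => ⟨?_, ?_⟩,
    fun k => l' k + r k * (u' k - l' k), fun k => ⟨?_, ?_⟩, ?_⟩
  · nlinarith [h k, hr0 k]
  · nlinarith [h k, hr0 k]
  · nlinarith [h' k, hr0 k]
  · nlinarith [h' k, hr0 k]
  · ext k
    have hpos : (u k - l k) + (u' k - l' k) ≠ 0 := by linarith [h k, h' k]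
    have h1 : r k * ((u k - l k) + (u' k - l' k)) = z k - (l k + l' k) :=
      div_mul_cancel₀ _ hpos
    simp only [Pi.add_apply]
    linarith

lemma brunnMinkowski_box (hd : 0 < d) {l u l' u' : Fin d → ℝ} (h : (box l u).Nonempty)
    (h' : (box l' u').Nonempty) :
    (volume.real (box l u) ^ ((d : ℝ)⁻¹) + volume.real (box l' u') ^ ((d : ℝ)⁻¹)) ^ d ≤
      volume.real (box l u + box l' u') := by
  obtain ⟨x, hx⟩ := h
  obtain ⟨y, hy⟩ := h'
  have h1 : ∀ k, l k < u k := fun k => (hx k).1.trans_lt (hx k).2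
  have h2 : ∀ k, l' k < u' k := fun k => (hy k).1.trans_lt (hy k).2
  refine le_trans ?_ (measureReal_mono (box_add_subset h1 h2)
    ((isBounded_box _ _).add (isBounded_box _ _)).measure_lt_top.ne)
  rw [volume_box, volume_box, volume_box]
  have e1 : ∀ k, max (u k - l k) 0 = u k - l k := fun k => max_eq_left (by linarith [h1 k])
  have e2 : ∀ k, max (u' k - l' k) 0 = u' k - l' k := fun k => max_eq_left (by linarith [h2 k])
  have e3 : ∀ k, max ((u + u') k - (l + l') k) 0 = (u k - l k) + (u' k - l' k) := fun k => by
    simp only [Pi.add_apply]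
    rw [max_eq_left (by linarith [h1 k, h2 k])]; ring
  simp only [e1, e2, e3]
  exact prod_rpow_add_le hd (fun k => sub_pos.2 (h1 k)) (fun k => sub_pos.2 (h2 k))

lemma homogeneous_aux (hd : 0 < d) {θ a b : ℝ} (hθ : 0 ≤ θ) (ha : 0 ≤ a) (hb : 0 ≤ b) :
    ((θ * a) ^ ((d : ℝ)⁻¹) + (θ * b) ^ ((d : ℝ)⁻¹)) ^ d =
      θ * (a ^ ((d : ℝ)⁻¹) + b ^ ((d : ℝ)⁻¹)) ^ d := by
  rw [Real.mul_rpow hθ ha, Real.mul_rpow hθ hb, ← mul_add, mul_pow,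
    Real.rpow_inv_natCast_pow hθ (Nat.pos_iff_ne_zero.1 hd)]

/-- The inductive step of the Hadwiger–Ohmann argument: if `A` is cut by `x k = t`, and
Brunn–Minkowski holds for the lower parts and for the upper parts of `A` and of `B` whenever the
latter is cut into two nonempty parts, then it holds for `A` and `B`. -/
lemma brunnMinkowski_step (hd : 0 < d) {n m : ℕ} {A B : Set (Fin d → ℝ)}
    (hA : IsBoxUnion ι n A) (hB : IsBoxUnion ι m B) (hBne : B.Nonempty) {k : Fin d} {t : ℝ}
    (hlo : (A ∩ below k t).Nonempty) (hup : (A ∩ (below k t)ᶜ).Nonempty)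
    (ih : ∀ r, (B ∩ below k r).Nonempty → (B ∩ (below k r)ᶜ).Nonempty →
      (volume.real (A ∩ below k t) ^ ((d : ℝ)⁻¹) +
        volume.real (B ∩ below k r) ^ ((d : ℝ)⁻¹)) ^ d ≤
        volume.real (A ∩ below k t + B ∩ below k r) ∧
      (volume.real (A ∩ (below k t)ᶜ) ^ ((d : ℝ)⁻¹) +
        volume.real (B ∩ (below k r)ᶜ) ^ ((d : ℝ)⁻¹)) ^ d ≤
        volume.real (A ∩ (below k t)ᶜ + B ∩ (below k r)ᶜ)) :
    (volume.real A ^ ((d : ℝ)⁻¹) + volume.real B ^ ((d : ℝ)⁻¹)) ^ d ≤ volume.real (A + B) := by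
  have hlo' := (hA.inter_below k t).volume_pos hlo
  have hup' := (hA.inter_compl_below k t).volume_pos hup
  have hsA := hA.volume_split k t
  have hA0 : 0 < volume.real A := by linarith
  have hB0 := hB.volume_pos hBne
  set θ := volume.real (A ∩ below k t) / volume.real A with hθ
  have hθ0 : 0 < θ := div_pos hlo' hA0
  have hθ1 : θ < 1 := (div_lt_one hA0).2 (by linarith)
  have eA : volume.real (A ∩ below k t) = θ * volume.real A := (div_mul_cancel₀ _ hA0.ne').symm
  have eA' : volume.real (A ∩ (below k t)ᶜ) = (1 - θ) * volume.real A := by linarith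
  obtain ⟨r, eB⟩ := hB.exists_cut k (c := θ * volume.real B) (by positivity) (by nlinarith)
  have hsB := hB.volume_split k r
  have eB' : volume.real (B ∩ (below k r)ᶜ) = (1 - θ) * volume.real B := by linarith
  have nlo : (B ∩ below k r).Nonempty := by
    by_contra hcon
    rw [Set.not_nonempty_iff_eq_empty] at hcon
    rw [hcon, measureReal_empty] at eB
    have := mul_pos hθ0 hB0
    linarith
  have nup : (B ∩ (below k r)ᶜ).Nonempty := by
    by_contra hcon
    rw [Set.not_nonempty_iff_eq_empty] at hcon
    rw [hcon, measureReal_empty] at eB'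
    have := mul_pos (sub_pos.2 hθ1) hB0
    linarith
  obtain ⟨i1, i2⟩ := ih r nlo nup
  rw [eA, eB, homogeneous_aux hd hθ0.le hA0.le hB0.le] at i1
  rw [eA', eB', homogeneous_aux hd (sub_pos.2 hθ1).le hA0.le hB0.le] at i2
  have hfin : volume (A + B) ≠ ⊤ := (hA.isBounded.add hB.isBounded).measure_lt_top.ne
  have hsplit := measureReal_inter_add_sdiff (μ := volume) (s := A + B)
    (measurableSet_below k (t + r)) hfin
  have j1 : volume.real (A ∩ below k t + B ∩ below k r) ≤
      volume.real ((A + B) ∩ below k (t + r)) := by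
    refine measureReal_mono ?_ (measure_ne_top_of_subset Set.inter_subset_left hfin)
    rintro _ ⟨a, ⟨ha, ha'⟩, b, ⟨hb, hb'⟩, rfl⟩
    have hlt : a k + b k < t + r := add_lt_add ha' hb'
    exact ⟨⟨a, ha, b, hb, rfl⟩, hlt⟩
  have j2 : volume.real (A ∩ (below k t)ᶜ + B ∩ (below k r)ᶜ) ≤
      volume.real ((A + B) \ below k (t + r)) := by
    refine measureReal_mono ?_ (measure_ne_top_of_subset Set.sdiff_subset hfin)
    rintro _ ⟨a, ⟨ha, ha'⟩, b, ⟨hb, hb'⟩, rfl⟩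
    have ha2 : ¬ a k < t := ha'
    have hb2 : ¬ b k < r := hb'
    have hge : ¬ a k + b k < t + r := not_lt.2 (add_le_add (not_lt.1 ha2) (not_lt.1 hb2))
    exact ⟨⟨a, ha, b, hb, rfl⟩, hge⟩
  linarith

/-- The Brunn–Minkowski inequality for finite unions of boxes. -/
theorem brunnMinkowski_boxes (hd : 0 < d) (N : ℕ) : ∀ {n m : ℕ} {A B : Set (Fin d → ℝ)},
    n + m ≤ N → IsBoxUnion ι n A → IsBoxUnion ι m B → A.Nonempty → B.Nonempty →
    (volume.real A ^ ((d : ℝ)⁻¹) + volume.real B ^ ((d : ℝ)⁻¹)) ^ d ≤ volume.real (A + B) := by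
  induction N using Nat.strong_induction_on with
  | _ N IH =>
  intro n m A B hN hA hB hAne hBne
  rcases hA.exists_split hAne with ⟨l, u, rfl⟩ | ⟨k, t, p, hp, s1, s2, n1, n2⟩
  · rcases hB.exists_split hBne with ⟨l', u', rfl⟩ | ⟨k, t, p, hp, s1, s2, n1, n2⟩
    · exact brunnMinkowski_box hd hAne hBne
    · rw [add_comm (_ ^ _), add_comm (box l u)]
      exact brunnMinkowski_step hd hB hA hAne n1 n2 fun r m1 m2 =>
        ⟨IH (p + n) (by omega) le_rfl s1 (hA.inter_below k r) n1 m1,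
          IH (p + n) (by omega) le_rfl s2 (hA.inter_compl_below k r) n2 m2⟩
  · exact brunnMinkowski_step hd hA hB hBne n1 n2 fun r m1 m2 =>
      ⟨IH (p + m) (by omega) le_rfl s1 (hB.inter_below k r) n1 m1,
        IH (p + m) (by omega) le_rfl s2 (hB.inter_compl_below k r) n2 m2⟩

/-! ### From lattice points to unit cubes -/

/-- The half-open unit cube `x + [0,1)^d` at a lattice point. -/
def cube (x : Fin d → ℤ) : Set (Fin d → ℝ) := box (fun k => (x k : ℝ)) (fun k => (x k : ℝ) + 1)

lemma mem_cube {x : Fin d → ℤ} {a : Fin d → ℝ} : a ∈ cube x ↔ (fun k => ⌊a k⌋) = x := by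
  simp only [cube, box, Set.mem_ofPred_eq, funext_iff, Int.floor_eq_iff]

/-- The thickening of a finite set of lattice points by unit cubes. -/
def cubes (X : Finset (Fin d → ℤ)) : Set (Fin d → ℝ) := ⋃ x ∈ X, cube x

lemma mem_cubes {X : Finset (Fin d → ℤ)} {a : Fin d → ℝ} :
    a ∈ cubes X ↔ (fun k => ⌊a k⌋) ∈ X := by
  simp [cubes, mem_cube]

lemma cube_nonempty (x : Fin d → ℤ) : (cube x).Nonempty :=
  ⟨fun k => (x k : ℝ), by simp [mem_cube]⟩

lemma cube_disjoint {x y : Fin d → ℤ} (h : x ≠ y) : Disjoint (cube x) (cube y) :=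
  Set.disjoint_left.2 fun _ hx hy => h ((mem_cube.1 hx).symm.trans (mem_cube.1 hy))

lemma isBoxUnion_cubes (X : Finset (Fin d → ℤ)) :
    IsBoxUnion (Fin d → ℤ) X.card (cubes X) :=
  ⟨X, _, _, le_rfl, fun x _ => cube_nonempty x, fun _ _ _ _ h => cube_disjoint h, rfl⟩

lemma cubes_nonempty {X : Finset (Fin d → ℤ)} (h : X.Nonempty) : (cubes X).Nonempty := by
  obtain ⟨x, hx⟩ := h
  exact ⟨fun k => (x k : ℝ), by simpa [mem_cubes] using hx⟩

lemma volume_cubes (X : Finset (Fin d → ℤ)) : volume.real (cubes X) = X.card := by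
  rw [cubes, measureReal_biUnion_finset (fun _ _ _ _ h => cube_disjoint h)
    (fun _ _ => measurableSet_box _ _) (fun _ _ => (isBounded_box _ _).measure_lt_top.ne)]
  simp [cube, volume_box]

lemma cubes_add_subset (X Y : Finset (Fin d → ℤ)) :
    cubes X + cubes Y ⊆
      cubes (X + Y + Fintype.piFinset fun _ : Fin d => ({0, 1} : Finset ℤ)) := by
  rintro _ ⟨a, ha, b, hb, rfl⟩
  rw [mem_cubes] at ha hb ⊢
  refine Finset.mem_add.2 ⟨_, Finset.add_mem_add ha hb,
    fun k => ⌊a k + b k⌋ - (⌊a k⌋ + ⌊b k⌋), ?_, ?_⟩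
  · rw [Fintype.mem_piFinset]
    intro k
    have h1 := Int.le_floor_add (a k) (b k)
    have h2 := Int.le_floor_add_floor (a k) (b k)
    simp only [Finset.mem_insert, Finset.mem_singleton]
    omega
  · ext k
    simp

end Boxes

/-- Discrete Brunn–Minkowski: for finite non-empty `X, Y ⊂ ℤ^d`,
`|X + Y + {0,1}^d|^{1/d} ≥ |X|^{1/d} + |Y|^{1/d}`. -/
theorem stmt3 (d : ℕ) (hd : 0 < d) (X Y : Finset (Fin d → ℤ))
    (hX : X.Nonempty) (hY : Y.Nonempty) :
    ((X + Y + Fintype.piFinset fun _ : Fin d => ({0, 1} : Finset ℤ)).card : ℝ)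
        ^ ((d : ℝ)⁻¹) ≥
      (X.card : ℝ) ^ ((d : ℝ)⁻¹) + (Y.card : ℝ) ^ ((d : ℝ)⁻¹) := by
  have h1 := brunnMinkowski_boxes hd _ le_rfl (isBoxUnion_cubes X) (isBoxUnion_cubes Y)
    (cubes_nonempty hX) (cubes_nonempty hY)
  have h2 := MeasureTheory.measureReal_mono (μ := MeasureTheory.volume) (cubes_add_subset X Y)
    (isBoxUnion_cubes _).isBounded.measure_lt_top.ne
  rw [volume_cubes, volume_cubes] at h1
  rw [volume_cubes] at h2
  have h3 := Real.rpow_le_rpow (by positivity) (h1.trans h2) (inv_nonneg.2 (Nat.cast_nonneg d))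
  rwa [Real.pow_rpow_inv_natCast (by positivity) hd.ne'] at h3
end

section
/- Define, for integers k and m, the rational number f₁(k,m) = (m+2)(m+1)·(2^{k−m} − 3/2) + (m+1)(k−m−1)·(2^{k−m−1} − 3/2) − (k−m−1)(k−m)·(3·2^{m−1} − 2^{k−m−2} + 3/2). Then for integers m ≥ 3 and m+2 ≤ k ≤ 2m−1, one has f₁(k,m) > 0 if and only if (k,m) is one of the pairs (5,3), (6,4), (7,4), (7,5), (8,5), (9,5), (11,6), (13,7). -/
/-!
Write `m = j + d` and `k = m + j` with `j = k - m ≥ 2`, `d ≥ 1`. Collecting powers of two,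
`f₁(k,m) = 2^(j-2) * (A - 6 j (j-1) 2^d) - (3/2) * B` with `B ≥ 0` and
`A = 4 (m+2)(m+1) + 2 (m+1)(j-1) + j (j-1)`.
For fixed `j`, passing from `d` to `d + 1` at most doubles `A`, while `6 j (j-1) 2^d` doubles
exactly. So `A ≤ 6 j (j-1) 2^d`, and hence `f₁(k,m) ≤ 0`, propagates from the smallest admissible
`d` to all of `m ≥ 9`. The finitely many pairs with `m ≤ 8` are evaluated directly
(at `m = 8`, `k = 15` the bound on `A` fails although `f₁` is negative).
-/

/-- `f₁(k,m) = (m+2)(m+1)(2^{k-m} - 3/2) + (m+1)(k-m-1)(2^{k-m-1} - 3/2)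
              - (k-m-1)(k-m)(3·2^{m-1} - 2^{k-m-2} + 3/2)`. -/
def f1 (k m : ℤ) : ℚ :=
  ((m : ℚ) + 2) * ((m : ℚ) + 1) * ((2 : ℚ) ^ (k - m) - 3 / 2)
    + ((m : ℚ) + 1) * ((k : ℚ) - (m : ℚ) - 1) * ((2 : ℚ) ^ (k - m - 1) - 3 / 2)
    - ((k : ℚ) - (m : ℚ) - 1) * ((k : ℚ) - (m : ℚ))
        * (3 * (2 : ℚ) ^ (m - 1) - (2 : ℚ) ^ (k - m - 2) + 3 / 2)

/-- The bound `A ≤ 6 j (j-1) 2^d` in the variables `i = j - 2`, `d = m - j`, for `m ≥ 9`. -/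
lemma coeff_le (i d : ℕ) (hd : 1 ≤ d) (h : 9 ≤ i + 2 + d) :
    4 * (i + d + 4) * (i + d + 3) + 2 * (i + d + 3) * (i + 1) + (i + 2) * (i + 1)
      ≤ 6 * (i + 2) * (i + 1) * 2 ^ d := by
  induction d with
  | zero => omega
  | succ d ih =>
    by_cases h1 : 1 ≤ d ∧ 9 ≤ i + 2 + d
    · have := ih h1.1 h1.2
      rw [pow_succ]
      nlinarith [Nat.zero_le (i * d), Nat.zero_le (i * i), Nat.zero_le (d * d)]
    -- The base of the induction is `d = 1` when `j ≥ 8`, and `m = 9` when `j ≤ 7`.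
    · rcases Nat.eq_zero_or_pos d with rfl | hpos
      · have : 6 ≤ i := by omega
        norm_num
        nlinarith
      · have hi : i ≤ 5 := by omega
        obtain rfl : d = 6 - i := by omega
        interval_cases i <;> norm_num

lemma f1_nonpos (k m : ℤ) (hm : 9 ≤ m) (hk1 : m + 2 ≤ k) (hk2 : k ≤ 2 * m - 1) :
    f1 k m ≤ 0 := by
  obtain ⟨i, hi⟩ := Int.eq_ofNat_of_zero_le (show 0 ≤ k - m - 2 by omega)
  obtain ⟨d, hd⟩ := Int.eq_ofNat_of_zero_le (show 0 ≤ 2 * m - k by omega)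
  obtain rfl : m = i + 2 + d := by omega
  obtain rfl : k = i + 2 + d + (i + 2) := by omega
  have hA := coeff_le i d (by omega) (by omega)
  have hA' : (4 * (i + d + 4) * (i + d + 3) + 2 * (i + d + 3) * (i + 1) + (i + 2) * (i + 1) : ℚ)
      ≤ 6 * (i + 2) * (i + 1) * 2 ^ d := by exact_mod_cast hA
  have e1 : (2 : ℚ) ^ ((i + 2 + d + (i + 2) : ℤ) - (i + 2 + d)) = 4 * 2 ^ i := by
    rw [show (i + 2 + d + (i + 2) : ℤ) - (i + 2 + d) = ((i + 2 : ℕ) : ℤ) by push_cast; ring,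
      zpow_natCast]
    ring
  have e2 : (2 : ℚ) ^ ((i + 2 + d + (i + 2) : ℤ) - (i + 2 + d) - 1) = 2 * 2 ^ i := by
    rw [show (i + 2 + d + (i + 2) : ℤ) - (i + 2 + d) - 1 = ((i + 1 : ℕ) : ℤ) by push_cast; ring,
      zpow_natCast]
    ring
  have e3 : (2 : ℚ) ^ ((i + 2 + d + (i + 2) : ℤ) - (i + 2 + d) - 2) = 2 ^ i := by
    rw [show (i + 2 + d + (i + 2) : ℤ) - (i + 2 + d) - 2 = (i : ℤ) by ring, zpow_natCast]
  have e4 : (2 : ℚ) ^ ((i + 2 + d : ℤ) - 1) = 2 * 2 ^ i * 2 ^ d := by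
    rw [show (i + 2 + d : ℤ) - 1 = ((i + d + 1 : ℕ) : ℤ) by push_cast; ring, zpow_natCast]
    ring
  have hX : (0 : ℚ) ≤ 2 ^ i := by positivity
  have hmul := mul_le_mul_of_nonneg_left hA' hX
  have hB : (0 : ℚ) ≤ 3 / 2 * ((i + d + 4) * (i + d + 3) + (i + d + 3) * (i + 1)
      + (i + 2) * (i + 1)) := by positivity
  unfold f1
  rw [e1, e2, e3, e4]
  push_cast
  linarith

/-- Lemma 8: the pairs `(k,m) ∈ ℤ²` with `m ≥ 3` and `m+2 ≤ k ≤ 2m-1` for which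
`f₁(k,m) > 0` are exactly `(5,3),(6,4),(7,4),(7,5),(8,5),(9,5),(11,6),(13,7)`. -/
theorem stmt10 (k m : ℤ) (hm : 3 ≤ m) (hk1 : m + 2 ≤ k) (hk2 : k ≤ 2 * m - 1) :
    0 < f1 k m ↔
      (k = 5 ∧ m = 3) ∨ (k = 6 ∧ m = 4) ∨ (k = 7 ∧ m = 4) ∨ (k = 7 ∧ m = 5) ∨
      (k = 8 ∧ m = 5) ∨ (k = 9 ∧ m = 5) ∨ (k = 11 ∧ m = 6) ∨ (k = 13 ∧ m = 7) := by
  rcases le_or_gt 9 m with h | h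
  · have := f1_nonpos k m h hk1 hk2
    constructor
    · intro h0
      linarith
    · omega
  · have hk : k ≤ 15 := by omega
    unfold f1
    interval_cases m <;> interval_cases k <;> norm_num
end

section
/- Define, for integers k and m with m+1 ≤ k ≤ 2m−2, the rational number f(k,m) = ((k−m)/(m+1))·(2^{m−1} − 2^{k−m−1} + 1) − 2^{k−m} + 1. Then for all integers m ≥ 3 and m+1 ≤ k ≤ 2m−2, except when k = 2m−2 and m ∈ {4,5,6,7}, one has f(k,m) ≥ 0. -/
/-!
Put `k - m = n + 1` and `m = n + 1 + d`, so that `n ≥ 0` and `d ≥ 2`, and let `a = 2 ^ n`.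
Multiplying `f(k,m)` by `m + 1 > 0` gives
`a * ((n + 1) * (2 ^ d - 3) - 2 * (d + 1)) + 2 * (n + 1) + d + 1`,
so it suffices that this is nonnegative (`numerator_nonneg`). For `d ≥ 4` the bracket is
nonnegative because `2 ^ d ≥ 2 * d + 5`. For `d = 3` it is `5 * n - 3`, negative only at `n = 0`,
and for `d = 2` it is `n - 5`; the values `n = 1, 2, 3, 4` with `d = 2` are exactly the
exceptional pairs, and the two remaining negative brackets, both at `n = 0`, are compensated
by the last terms.
-/

/-- `f(k,m) = ((k-m)/(m+1))(2^{m-1} - 2^{k-m-1} + 1) - 2^{k-m} + 1`. -/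
def f (k m : ℤ) : ℚ :=
  (((k : ℚ) - (m : ℚ)) / ((m : ℚ) + 1))
      * ((2 : ℚ) ^ (m - 1) - (2 : ℚ) ^ (k - m - 1) + 1)
    - (2 : ℚ) ^ (k - m) + 1

lemma two_mul_add_five_le_two_pow (d : ℕ) (hd : 4 ≤ d) : 2 * d + 5 ≤ 2 ^ d := by
  induction d, hd using Nat.le_induction with
  | base => norm_num
  | succ d hd ih => rw [pow_succ]; omega

lemma numerator_nonneg (n d : ℕ) (hd : 2 ≤ d)
    (hexc : ¬(d = 2 ∧ (n = 1 ∨ n = 2 ∨ n = 3 ∨ n = 4))) :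
    (0 : ℚ) ≤ 2 ^ n * ((n + 1) * (2 ^ d - 3) - 2 * (d + 1)) + 2 * (n + 1) + d + 1 := by
  have ha : (0 : ℚ) < 2 ^ n := by positivity
  have hn : (0 : ℚ) ≤ n := n.cast_nonneg
  have hd0 : (0 : ℚ) ≤ d := d.cast_nonneg
  -- A nonnegative bracket is enough, since all the other terms are nonnegative.
  have key (h : (0 : ℚ) ≤ (n + 1) * (2 ^ d - 3) - 2 * (d + 1)) :
      (0 : ℚ) ≤ 2 ^ n * ((n + 1) * (2 ^ d - 3) - 2 * (d + 1)) + 2 * (n + 1) + d + 1 := by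
    have := mul_nonneg ha.le h
    linarith
  rcases Nat.eq_zero_or_pos n with rfl | hn1
  · obtain rfl | rfl | h4 : d = 2 ∨ d = 3 ∨ 4 ≤ d := by omega
    · norm_num
    · norm_num
    · have h : (2 * d + 5 : ℚ) ≤ 2 ^ d := by exact_mod_cast two_mul_add_five_le_two_pow d h4
      apply key
      push_cast
      linarith
  · have hn1' : (1 : ℚ) ≤ n := by exact_mod_cast hn1
    apply key
    obtain rfl | rfl | h4 : d = 2 ∨ d = 3 ∨ 4 ≤ d := by omega
    · have h5 : (5 : ℚ) ≤ n := by
        have : 5 ≤ n := by omega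
        exact_mod_cast this
      norm_num
      linarith
    · norm_num
      linarith
    · have h : (2 * d + 5 : ℚ) ≤ 2 ^ d := by exact_mod_cast two_mul_add_five_le_two_pow d h4
      nlinarith [mul_nonneg hn (show (0 : ℚ) ≤ 2 ^ d - 3 by linarith)]

/-- For all integers `m ≥ 3` and `m+1 ≤ k ≤ 2m-2`, except when `k = 2m-2` and
`m ∈ {4,5,6,7}`, one has `f(k,m) ≥ 0`. -/
theorem stmt11 (k m : ℤ) (hm : 3 ≤ m) (hk1 : m + 1 ≤ k) (hk2 : k ≤ 2 * m - 2)
    (hexc : ¬(k = 2 * m - 2 ∧ (m = 4 ∨ m = 5 ∨ m = 6 ∨ m = 7))) :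
    0 ≤ f k m := by
  obtain ⟨n, hn⟩ := Int.eq_ofNat_of_zero_le (show 0 ≤ k - m - 1 by omega)
  obtain ⟨d, hd⟩ := Int.eq_ofNat_of_zero_le (show 0 ≤ 2 * m - k by omega)
  obtain rfl : m = n + 1 + d := by omega
  obtain rfl : k = n + 1 + (n + 1 + d) := by omega
  have hnum := numerator_nonneg n d (by omega) (by omega)
  have e1 : (n + 1 + d - 1 : ℤ) = ((n + d : ℕ) : ℤ) := by push_cast; ring
  have e2 : (n + 1 + (n + 1 + d) - (n + 1 + d) : ℤ) = ((n + 1 : ℕ) : ℤ) := by push_cast; ring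
  have hpos : (0 : ℚ) < n + 1 + d + 1 := by positivity
  have hf : f (n + 1 + (n + 1 + d)) (n + 1 + d) =
      (2 ^ n * ((n + 1) * (2 ^ d - 3) - 2 * (d + 1)) + 2 * (n + 1) + d + 1)
        / (n + 1 + d + 1) := by
    unfold f
    rw [hn, e1, e2]
    simp only [zpow_natCast]
    push_cast
    field_simp
    ring
  rw [hf]
  exact div_nonneg hnum hpos.le
end

section
/- Let d = 2m be an even integer with m ≥ 1, and let A ⊂ ℤ^d be a finite set containing every point (σ(1), σ(2), …, σ(d)) with σ a permutation of {1,…,d}. Then |A+A| ≥ C_m·(|A| − 2^m) + 3^m. -/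
/-!
The permutations of `{1, …, n}`, viewed as points of `ℤ^n`, contain a nondegenerate parallelepiped of
dimension `n - 1`: read a permutation from left to right and let each entry be either the smallest or
the largest value still unused; changing one such choice, and shifting the later entries accordingly,
is a translation by a fixed vector (`exists_cube`). The `j`-th of these vectors vanishes before
position `j`, so the coordinate functionals put the family in triangular form.

For a `D`-dimensional parallelepiped `Q` of this kind, `|X + Y + Q| ≥ 2^D √(|X| |Y|)` for all finite
`X, Y`. This is proved one edge at a time, by slicing with a linear functional and applying a discrete
Prékopa–Leindler inequality on `ℤ` to the sizes of the slices (`two_mul_sqrt_sum_le`, `cube_step`).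
If a translate of `Q` lies in `A`, take a nonempty `X ⊆ A` minimizing `|X + A| / |X|`; Petridis'
inequality gives `2^D |X| ≤ |X + X + Q| ≤ |X + A + A| ≤ (|X + A| / |X|)^2 |X|`, and hence
`|A + A|^2 ≥ 2^D |A|^2` (`sq_card_add_ge`).

With `n = 2m` and `D = 2m - 1` this beats the required bound when `m ≥ 3`, because
`(C_m + 1)^2 ≤ 2^(2m - 1)` and `|A| ≥ (2m)! ≥ 3^m`. For `m = 1` the claim is `|A + A| ≥ 2|A| - 1`,
valid in every torsion-free group. For `m = 2` it is `|A + A| ≥ 3|A| - 3`, which is obtained by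
comparing the level sets of the slice sizes of `A` and of `A + A` (`three_mul_card_le`).
-/

open Pointwise

/-- The constant `C_d` from the paper. -/
noncomputable def Cconst (d : ℕ) : ℝ :=
  if d ≤ 5 then 2 * (3 / 2) ^ (d - 1)
  else if d % 2 = 0 then 2 ^ (d / 2 + 1) - 1
  else 3 * 2 ^ ((d - 1) / 2) - 3 / 2


/-! ### A discrete Prékopa–Leindler inequality on `ℤ` -/

/-- The layer-cake formula, truncated at height `1`, for the counting measure on `S`. -/
lemma integral_card_level {ι : Type*} (S : Finset ι) (f : ι → ℝ) (hf : ∀ i ∈ S, 0 ≤ f i) :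
    IntervalIntegrable (fun x : ℝ => ((S.filter (fun i => x ≤ f i)).card : ℝ))
      MeasureTheory.volume 0 1 ∧
    ∫ x in (0 : ℝ)..1, ((S.filter (fun i => x ≤ f i)).card : ℝ) = ∑ i ∈ S, min (f i) 1 := by
  have key : (fun x : ℝ => ((S.filter (fun i => x ≤ f i)).card : ℝ)) =
      fun x => ∑ i ∈ S, Set.indicator {x | x ≤ f i} (fun _ => (1 : ℝ)) x := by
    funext x
    simp [Set.indicator_apply]
  have hint : ∀ i, IntervalIntegrable (Set.indicator {x | x ≤ f i} (fun _ => (1 : ℝ)))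
      MeasureTheory.volume 0 1 := by
    intro i
    have h1 : IntervalIntegrable (fun _ : ℝ => (1 : ℝ)) MeasureTheory.volume 0 1 := by simp
    rw [intervalIntegrable_iff] at h1 ⊢
    exact h1.indicator measurableSet_Iic
  rw [key]
  constructor
  · simpa only [Finset.sum_fn] using IntervalIntegrable.sum S (fun i _ => hint i)
  · rw [intervalIntegral.integral_finsetSum (fun i _ => hint i)]
    refine Finset.sum_congr rfl fun i hi => ?_
    rcases le_total (f i) 1 with h | h
    · rw [intervalIntegral.integral_indicator ⟨hf i hi, h⟩]
      simp [h]
    · rw [min_eq_right h]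
      have : ∫ x in (0 : ℝ)..1, Set.indicator {x | x ≤ f i} (fun _ => (1 : ℝ)) x =
          ∫ x in (0 : ℝ)..1, (1 : ℝ) := by
        refine intervalIntegral.integral_congr fun x hx => ?_
        rw [Set.uIcc_of_le zero_le_one] at hx
        simp [hx.2.trans h]
      simp [this]

lemma card_add_pair {N : ℤ} (hN : N ≠ 0) {S T : Finset ℤ} (hS : S.Nonempty) (hT : T.Nonempty) :
    S.card + T.card ≤ (S + T + {0, N}).card := by
  have h1 := cauchy_davenport_of_isAddTorsionFree hS hT
  have h2 := cauchy_davenport_of_isAddTorsionFree (hS.add hT)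
    (Finset.insert_nonempty (0 : ℤ) {N})
  rw [Finset.card_pair hN.symm] at h2
  omega

/-- The normalized case: both functions have maximum `1`, so that for each height `x ∈ [0, 1]` the
level sets of `f` and `g` are nonempty and `card_add_pair` applies to them. Integrating over `x`
gives the claim. -/
lemma sum_add_sum_le_of_min_le {N : ℤ} (hN : N ≠ 0) {S T K : Finset ℤ} {f g h : ℤ → ℝ}
    (hf : ∀ i ∈ S, 0 ≤ f i ∧ f i ≤ 1) (hg : ∀ j ∈ T, 0 ≤ g j ∧ g j ≤ 1)
    (hh : ∀ k ∈ K, 0 ≤ h k)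
    (hf1 : ∃ i ∈ S, f i = 1) (hg1 : ∃ j ∈ T, g j = 1)
    (h0 : ∀ i ∈ S, ∀ j ∈ T, i + j ∈ K ∧ min (f i) (g j) ≤ h (i + j))
    (hs : ∀ i ∈ S, ∀ j ∈ T, i + j + N ∈ K ∧ min (f i) (g j) ≤ h (i + j + N)) :
    ∑ i ∈ S, f i + ∑ j ∈ T, g j ≤ ∑ k ∈ K, h k := by
  obtain ⟨f_int, f_eq⟩ := integral_card_level S f (fun i hi => (hf i hi).1)
  obtain ⟨g_int, g_eq⟩ := integral_card_level T g (fun i hi => (hg i hi).1)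
  obtain ⟨h_int, h_eq⟩ := integral_card_level K h hh
  rw [Finset.sum_congr rfl (fun i hi => min_eq_left (hf i hi).2)] at f_eq
  rw [Finset.sum_congr rfl (fun i hi => min_eq_left (hg i hi).2)] at g_eq
  rw [← f_eq, ← g_eq, ← intervalIntegral.integral_add f_int g_int]
  refine le_trans ?_ (h_eq.le.trans (Finset.sum_le_sum fun k _ => min_le_left _ _))
  refine intervalIntegral.integral_mono_on zero_le_one (f_int.add g_int) h_int fun x hx => ?_
  obtain ⟨i, hi, hi1⟩ := hf1
  obtain ⟨j, hj, hj1⟩ := hg1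
  have hS : (S.filter (fun i => x ≤ f i)).Nonempty :=
    ⟨i, Finset.mem_filter.2 ⟨hi, hi1 ▸ hx.2⟩⟩
  have hT : (T.filter (fun j => x ≤ g j)).Nonempty :=
    ⟨j, Finset.mem_filter.2 ⟨hj, hj1 ▸ hx.2⟩⟩
  have hsub : S.filter (fun i => x ≤ f i) + T.filter (fun j => x ≤ g j) + {0, N} ⊆
      K.filter (fun k => x ≤ h k) := by
    intro z hz
    obtain ⟨y, hy, w, hw, rfl⟩ := Finset.mem_add.1 hz
    obtain ⟨a, ha, b, hb, rfl⟩ := Finset.mem_add.1 hy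
    rw [Finset.mem_filter] at ha hb ⊢
    have hab : x ≤ min (f a) (g b) := le_min ha.2 hb.2
    rcases Finset.mem_insert.1 hw with rfl | hw
    · rw [add_zero]
      exact ⟨(h0 a ha.1 b hb.1).1, hab.trans (h0 a ha.1 b hb.1).2⟩
    · rw [Finset.mem_singleton.1 hw]
      exact ⟨(hs a ha.1 b hb.1).1, hab.trans (hs a ha.1 b hb.1).2⟩
  exact_mod_cast (card_add_pair hN hS hT).trans (Finset.card_le_card hsub)

/-- A discrete Prékopa–Leindler inequality. Adding `{0, N}` to the sum of the supports is what produces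
the factor `2`; without it, two functions supported at a single point would satisfy no better bound
than with factor `1`. -/
lemma two_mul_sqrt_sum_le {N : ℤ} (hN : N ≠ 0) {S T K : Finset ℤ} {f g h : ℤ → ℝ} {c : ℝ}
    (hc : 0 < c) (hS : S.Nonempty) (hT : T.Nonempty)
    (hf : ∀ i ∈ S, 0 < f i) (hg : ∀ j ∈ T, 0 < g j) (hh : ∀ k ∈ K, 0 ≤ h k)
    (h0 : ∀ i ∈ S, ∀ j ∈ T, i + j ∈ K ∧ c * √(f i * g j) ≤ h (i + j))
    (hs : ∀ i ∈ S, ∀ j ∈ T, i + j + N ∈ K ∧ c * √(f i * g j) ≤ h (i + j + N)) :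
    2 * c * √((∑ i ∈ S, f i) * ∑ j ∈ T, g j) ≤ ∑ k ∈ K, h k := by
  obtain ⟨i₀, hi₀, hmaxf⟩ := Finset.exists_max_image S f hS
  obtain ⟨j₀, hj₀, hmaxg⟩ := Finset.exists_max_image T g hT
  have ha := hf i₀ hi₀
  have hb := hg j₀ hj₀
  set a := f i₀
  set b := g j₀
  have hab : 0 < c * √(a * b) := by positivity
  have hmin : ∀ i ∈ S, ∀ j ∈ T, ∀ y, c * √(f i * g j) ≤ y →
      min (f i / a) (g j / b) ≤ y / (c * √(a * b)) := by
    intro i hi j hj y hy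
    rw [le_div_iff₀ hab]
    refine le_trans ?_ hy
    have hm : 0 ≤ min (f i / a) (g j / b) :=
      le_min (div_nonneg (hf i hi).le ha.le) (div_nonneg (hg j hj).le hb.le)
    have : min (f i / a) (g j / b) * √(a * b) ≤ √(f i * g j) := by
      rw [← Real.sqrt_sq hm, ← Real.sqrt_mul (sq_nonneg _)]
      refine Real.sqrt_le_sqrt ?_
      calc min (f i / a) (g j / b) ^ 2 * (a * b)
          = min (f i / a) (g j / b) * min (f i / a) (g j / b) * (a * b) := by ring
        _ ≤ (f i / a) * (g j / b) * (a * b) := by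
            gcongr
            · exact div_nonneg (hf i hi).le ha.le
            · exact min_le_left _ _
            · exact min_le_right _ _
        _ = f i * g j := by field_simp
    calc min (f i / a) (g j / b) * (c * √(a * b))
        = c * (min (f i / a) (g j / b) * √(a * b)) := by ring
      _ ≤ c * √(f i * g j) := by gcongr
  have main := sum_add_sum_le_of_min_le hN (S := S) (T := T) (K := K)
    (f := fun i => f i / a) (g := fun j => g j / b) (h := fun k => h k / (c * √(a * b)))
    (fun i hi => ⟨div_nonneg (hf i hi).le ha.le, (div_le_one ha).2 (hmaxf i hi)⟩)
    (fun j hj => ⟨div_nonneg (hg j hj).le hb.le, (div_le_one hb).2 (hmaxg j hj)⟩)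
    (fun k hk => div_nonneg (hh k hk) hab.le)
    ⟨i₀, hi₀, div_self ha.ne'⟩ ⟨j₀, hj₀, div_self hb.ne'⟩
    (fun i hi j hj => ⟨(h0 i hi j hj).1, hmin i hi j hj _ (h0 i hi j hj).2⟩)
    (fun i hi j hj => ⟨(hs i hi j hj).1, hmin i hi j hj _ (hs i hi j hj).2⟩)
  rw [← Finset.sum_div, ← Finset.sum_div, ← Finset.sum_div, le_div_iff₀ hab] at main
  refine le_trans ?_ main
  set F := ∑ i ∈ S, f i
  set G := ∑ j ∈ T, g j
  have hF : 0 ≤ F := Finset.sum_nonneg fun i hi => (hf i hi).le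
  have hG : 0 ≤ G := Finset.sum_nonneg fun i hi => (hg i hi).le
  -- The arithmetic-geometric mean inequality for `F / a` and `G / b`.
  have amgm : 2 * √(F / a * (G / b)) ≤ F / a + G / b := by
    rw [Real.sqrt_mul (by positivity)]
    nlinarith [sq_nonneg (√(F / a) - √(G / b)), Real.sq_sqrt (show 0 ≤ F / a by positivity),
      Real.sq_sqrt (show 0 ≤ G / b by positivity)]
  calc 2 * c * √(F * G) = 2 * √(F / a * (G / b)) * (c * √(a * b)) := by
        have : √(F * G) = √(F / a * (G / b)) * √(a * b) := by
          rw [← Real.sqrt_mul (by positivity)]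
          congr 1
          field_simp
        rw [this]; ring
    _ ≤ _ := by gcongr

/-! ### Adding a parallelepiped -/

/-- Adding one edge `v` to `Q` doubles the constant. The functional `l` vanishes on `Q` but not on
`v`; the slices of `X` and `Y` along `l` are combined by the hypothesis on `Q`, and the resulting
bounds for the slices of the sum are assembled by `two_mul_sqrt_sum_le` with `N = l v`. -/
lemma cube_step {G : Type*} [AddCommGroup G] [DecidableEq G] (l : G →+ ℤ) {v : G} (hv : l v ≠ 0)
    {Q : Finset G} (hQ : ∀ q ∈ Q, l q = 0) {c : ℝ} (hc : 0 < c)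
    (H : ∀ X Y : Finset G, c * √((X.card : ℝ) * Y.card) ≤ ((X + Y + Q).card : ℝ))
    (X Y : Finset G) :
    2 * c * √((X.card : ℝ) * Y.card) ≤ ((X + Y + ({0, v} + Q)).card : ℝ) := by
  rcases X.eq_empty_or_nonempty with rfl | hX
  · simp
  rcases Y.eq_empty_or_nonempty with rfl | hY
  · simp
  set Z := X + Y + ({0, v} + Q)
  have slice : ∀ W : Finset G,
      (W.card : ℝ) = ∑ i ∈ W.image l, ((W.filter (fun x => l x = i)).card : ℝ) := by
    intro W
    exact_mod_cast Finset.card_eq_sum_card_image l W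
  have slice_pos : ∀ W : Finset G, ∀ i ∈ W.image l,
      0 < ((W.filter (fun x => l x = i)).card : ℝ) := by
    intro W i hi
    obtain ⟨x, hx, rfl⟩ := Finset.mem_image.1 hi
    have : (W.filter (fun y => l y = l x)).Nonempty := ⟨x, Finset.mem_filter.2 ⟨hx, rfl⟩⟩
    exact_mod_cast this.card_pos
  have hQne : Q.Nonempty := by
    by_contra hne
    rw [Finset.not_nonempty_iff_eq_empty] at hne
    have := H {0} {0}
    simp [hne] at this
    linarith
  have sub : ∀ w ∈ ({0, v} : Finset G), ∀ i ∈ X.image l, ∀ j ∈ Y.image l,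
      i + j + l w ∈ Z.image l ∧
      c * √(((X.filter (fun x => l x = i)).card : ℝ) * (Y.filter (fun x => l x = j)).card) ≤
        ((Z.filter (fun x => l x = i + j + l w)).card : ℝ) := by
    intro w hw i hi j hj
    constructor
    · obtain ⟨x, hx, rfl⟩ := Finset.mem_image.1 hi
      obtain ⟨y, hy, rfl⟩ := Finset.mem_image.1 hj
      obtain ⟨q, hq⟩ := hQne
      refine Finset.mem_image.2 ⟨x + y + (w + q), Finset.add_mem_add (Finset.add_mem_add hx hy)
        (Finset.add_mem_add hw hq), ?_⟩
      simp [hQ q hq]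
    · refine (H _ _).trans ?_
      norm_cast
      rw [← Finset.card_vadd_finset w]
      refine Finset.card_le_card fun z hz => ?_
      obtain ⟨u, hu, rfl⟩ := Finset.mem_vadd_finset.1 hz
      obtain ⟨p, hp, q, hq, rfl⟩ := Finset.mem_add.1 hu
      obtain ⟨x, hx, y, hy, rfl⟩ := Finset.mem_add.1 hp
      rw [Finset.mem_filter] at hx hy ⊢
      have e : w +ᵥ (x + y + q) = x + y + (w + q) := by
        rw [vadd_eq_add]; abel
      rw [e]
      refine ⟨Finset.add_mem_add (Finset.add_mem_add hx.1 hy.1) (Finset.add_mem_add hw hq), ?_⟩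
      simp [hQ q hq, hx.2, hy.2]
  rw [slice X, slice Y, slice Z]
  refine two_mul_sqrt_sum_le hv hc (hX.image l) (hY.image l) (slice_pos X) (slice_pos Y)
    (fun k _ => Nat.cast_nonneg _) ?_ (sub v (by simp))
  simpa using sub 0 (by simp)

/-- If `|X + X + Q| ≥ c |X|` for all `X` and `A` contains a translate of `Q`, then the doubling constant
of `A` is at least `√c`. -/
lemma sq_card_add_ge {G : Type*} [AddCommGroup G] [DecidableEq G] {Q A : Finset G} {c : ℝ}
    (H : ∀ X : Finset G, c * (X.card : ℝ) ≤ ((X + X + Q).card : ℝ))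
    (hA : A.Nonempty) {a : G} (hQ : ∀ q ∈ Q, a + q ∈ A) :
    c * (A.card : ℝ) ^ 2 ≤ ((A + A).card : ℝ) ^ 2 := by
  obtain ⟨X, hX, hmin⟩ := Finset.exists_min_image (A.powerset.erase ∅)
    (fun X => ((X + A).card : ℚ) / X.card) ⟨A, by simp [hA.ne_empty]⟩
  rw [Finset.mem_erase, Finset.mem_powerset] at hX
  have hXpos : ∀ Y ∈ A.powerset.erase ∅, (0 : ℚ) < Y.card := by
    intro Y hY
    exact_mod_cast Finset.card_pos.2 (Finset.nonempty_iff_ne_empty.2 (Finset.mem_erase.1 hY).1)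
  have hX0 : (0 : ℚ) < X.card := hXpos X (by simp [hX])
  have hmin' : ∀ Y ⊆ A, (X + A).card * Y.card ≤ (Y + A).card * X.card := by
    intro Y hY
    rcases Y.eq_empty_or_nonempty with rfl | hne
    · simp
    have hm : Y ∈ A.powerset.erase ∅ := by simp [hne.ne_empty, hY]
    have := hmin Y hm
    rw [div_le_div_iff₀ hX0 (hXpos Y hm)] at this
    exact_mod_cast this
  have h1 := Finset.pluennecke_petridis_inequality_add A (A := X) (B := A)
    (fun Y hY => hmin' Y (hY.trans hX.2))
  have h2 := hmin' A subset_rfl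
  have h3 : (X + X + Q).card ≤ (A + X + A).card := by
    rw [← Finset.card_vadd_finset a]
    refine Finset.card_le_card fun z hz => ?_
    obtain ⟨u, hu, rfl⟩ := Finset.mem_vadd_finset.1 hz
    obtain ⟨p, hp, q, hq, rfl⟩ := Finset.mem_add.1 hu
    obtain ⟨x, hx, y, hy, rfl⟩ := Finset.mem_add.1 hp
    have e : a +ᵥ (x + y + q) = x + y + (a + q) := by
      rw [vadd_eq_add]; abel
    rw [e]
    exact Finset.add_mem_add (Finset.add_mem_add (hX.2 hx) hy) (hQ q hq)
  rw [add_comm A X] at h1 h3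
  have h4 := (H X).trans (Nat.cast_le.2 h3)
  have hx : (0 : ℝ) < X.card := by exact_mod_cast hX0
  have h1' : ((X + A + A).card : ℝ) * X.card ≤ (X + A).card * (X + A).card := by exact_mod_cast h1
  have h2' : ((X + A).card : ℝ) * A.card ≤ (A + A).card * X.card := by exact_mod_cast h2
  set x : ℝ := (X.card : ℝ)
  set y : ℝ := ((X + A).card : ℝ)
  set s : ℝ := (A.card : ℝ)
  set t : ℝ := ((A + A).card : ℝ)
  have hxx : c * x * x ≤ y * y := (mul_le_mul_of_nonneg_right h4 hx.le).trans h1'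
  have hs : 0 ≤ s := Nat.cast_nonneg _
  have hy : 0 ≤ y := Nat.cast_nonneg _
  refine le_of_mul_le_mul_right ?_ (mul_pos hx hx)
  calc c * s ^ 2 * (x * x) = c * x * x * s ^ 2 := by ring
    _ ≤ y * y * s ^ 2 := by gcongr
    _ = (y * s) * (y * s) := by ring
    _ ≤ (t * x) * (t * x) := by gcongr
    _ = t ^ 2 * (x * x) := by ring

/-! ### The bound `3|A| - 3` for sets with enough large slices -/

lemma sum_eq_sum_level {ι : Type*} (S : Finset ι) (f : ι → ℕ) (M : ℕ) (hf : ∀ i ∈ S, f i ≤ M) :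
    ∑ i ∈ S, f i = ∑ t ∈ Finset.range M, (S.filter (fun i => t < f i)).card := by
  simp only [Finset.card_filter]
  rw [Finset.sum_comm]
  refine Finset.sum_congr rfl fun i hi => ?_
  rw [← Finset.card_filter]
  have : (Finset.range M).filter (fun t => t < f i) = Finset.range (f i) := by
    ext t
    have := hf i hi
    simp; omega
  simp [this]

lemma sum_level_le {ι : Type*} (S : Finset ι) (f : ι → ℕ) (M : ℕ) :
    ∑ t ∈ Finset.range M, (S.filter (fun i => t < f i)).card ≤ ∑ i ∈ S, f i := by
  simp only [Finset.card_filter]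
  rw [Finset.sum_comm]
  refine Finset.sum_le_sum fun i hi => ?_
  rw [← Finset.card_filter]
  calc _ ≤ (Finset.range (f i)).card := Finset.card_le_card (by intro t; simp)
    _ = f i := by simp

/-- The arithmetic behind `three_mul_card_le`. Here `N t` and `H u` count the slices of `A` and `A + A`
with more than `t`, respectively more than `u`, elements, and `m + 1` is the size of the largest slice
of `A`. Two lower bounds for `∑ H` are played against each other: one pairs nearly equal levels
(the `diag` bound), the other pairs every level with level `0` or with the top level `m`. -/
lemma three_mul_sum_level_le {H N : ℕ → ℤ} {m : ℕ} (hm : 3 ≤ m) (hN0 : 4 ≤ N 0) (hNm : 1 ≤ N m)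
    (hanti : ∀ t, N (t + 1) ≤ N t)
    (h : ∀ a ≤ m, ∀ b ≤ m, N a + N b - 1 ≤ H (a + b)) :
    3 * ∑ t ∈ Finset.range (m + 1), N t - 3 ≤ ∑ u ∈ Finset.range (m + 1 + m), H u := by
  have diag : ∀ r ≤ m, 2 * (∑ t ∈ Finset.range (r + 1), N t) + 2 * ∑ t ∈ Finset.range r, N (t + 1)
      - (2 * r + 1) ≤ ∑ u ∈ Finset.range (2 * r + 1), H u := by
    intro r
    induction r with
    | zero =>
      intro _
      have := h 0 (by omega) 0 (by omega)
      simp at this ⊢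
      linarith
    | succ r ih =>
      intro hr
      have e : 2 * (r + 1) + 1 = 2 * r + 1 + 1 + 1 := by ring
      rw [e, Finset.sum_range_succ _ (2 * r + 1 + 1), Finset.sum_range_succ _ (2 * r + 1),
        Finset.sum_range_succ _ (r + 1), Finset.sum_range_succ (fun t => N (t + 1)) r]
      have h1 := h (r + 1) hr (r + 1) hr
      have h2 := ih (by omega)
      have h3 := h r (by omega) (r + 1) hr
      have h4 := hanti r
      rw [show r + 1 + (r + 1) = 2 * r + 1 + 1 by ring] at h1
      rw [show r + (r + 1) = 2 * r + 1 by ring] at h3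
      push_cast
      linarith
  have hshift := Finset.sum_range_succ' N m
  have h1 := diag m le_rfl
  -- Pair the levels `u ≤ m` with level `0`, and the levels `1, …, m` with level `m`.
  have h2 : ∑ u ∈ Finset.range (m + 1), (N u + (N 0 - 1)) ≤ ∑ u ∈ Finset.range (m + 1), H u := by
    refine Finset.sum_le_sum fun u hu => ?_
    have := h u (by simp at hu; omega) 0 (by omega)
    rw [add_zero] at this
    linarith
  have h3 : ∑ x ∈ Finset.range m, N (x + 1) ≤ ∑ x ∈ Finset.range m, H (m + 1 + x) := by
    refine Finset.sum_le_sum fun x hx => ?_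
    have := h (x + 1) (by simp at hx; omega) m le_rfl
    rw [show x + 1 + m = m + 1 + x by ring] at this
    linarith
  rw [Finset.sum_add_distrib] at h2
  simp only [Finset.sum_const, Finset.card_range, nsmul_eq_mul] at h2
  rw [show 2 * m + 1 = m + 1 + m by ring] at h1
  have hsplit := Finset.sum_range_add H (m + 1) m
  have hm' : (3 : ℤ) ≤ m := by exact_mod_cast hm
  push_cast at h2
  -- The diagonal bound is `4n - 2 N 0 - (2m + 1)` for `n = ∑ N`; the other is `2n + m N 0 - m - 1`.
  by_cases hn : 2 * N 0 + 2 * m - 2 ≤ ∑ t ∈ Finset.range (m + 1), N t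
  · linarith
  · have : ∑ t ∈ Finset.range (m + 1), N t ≤ 2 * N 0 + 2 * m - 3 := by omega
    nlinarith [mul_nonneg (sub_nonneg.2 hm') (sub_nonneg.2 hN0)]

/-- Freiman's bound `|A + A| ≥ 3|A| - 3`, for a set having at least four nonempty slices along `l`, one
of which has at least four elements. -/
lemma three_mul_card_le {G : Type*} [AddCommGroup G] [IsAddTorsionFree G] [DecidableEq G]
    (l : G →+ ℤ) (A : Finset G) (h4 : 4 ≤ (A.image l).card)
    (hs : ∃ i, 4 ≤ (A.filter (fun x => l x = i)).card) :
    3 * A.card ≤ (A + A).card + 3 := by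
  set f : ℤ → ℕ := fun i => (A.filter (fun x => l x = i)).card
  set h : ℤ → ℕ := fun k => ((A + A).filter (fun x => l x = k)).card
  set S := A.image l
  set K := (A + A).image l
  have hfpos : ∀ i, i ∈ S ↔ 0 < f i := by
    intro i
    simp only [S, f, Finset.card_pos, Finset.mem_image, Finset.Nonempty, Finset.mem_filter]
  have hne : S.Nonempty := Finset.card_pos.1 (by omega)
  obtain ⟨i₀, hi₀, hmax⟩ := Finset.exists_max_image S f hne
  obtain ⟨m, hm⟩ : ∃ m, f i₀ = m + 1 :=
    ⟨f i₀ - 1, by have := (hfpos i₀).1 hi₀; omega⟩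
  have hm3 : 3 ≤ m := by
    obtain ⟨i, hi⟩ := hs
    have h1 : 4 ≤ f i := hi
    have := hmax i ((hfpos i).2 (by omega))
    omega
  have hA : A.card = ∑ t ∈ Finset.range (m + 1), (S.filter (fun i => t < f i)).card := by
    rw [Finset.card_eq_sum_card_image l A]
    exact sum_eq_sum_level S f (m + 1) fun i hi => hm ▸ hmax i hi
  have hAA : ∑ u ∈ Finset.range (m + 1 + m), (K.filter (fun k => u < h k)).card ≤
      (A + A).card := by
    rw [Finset.card_eq_sum_card_image l (A + A)]
    exact sum_level_le K h _
  have hlev : ∀ t ≤ m, (S.filter (fun i => t < f i)).Nonempty := fun t ht =>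
    ⟨i₀, Finset.mem_filter.2 ⟨hi₀, by omega⟩⟩
  have key := three_mul_sum_level_le (N := fun t => ((S.filter (fun i => t < f i)).card : ℤ))
    (H := fun u => ((K.filter (fun k => u < h k)).card : ℤ)) hm3
    (by
      have : S.filter (fun i => 0 < f i) = S :=
        Finset.filter_true_of_mem fun i hi => (hfpos i).1 hi
      simp only [this]
      exact_mod_cast h4)
    (by exact_mod_cast (hlev m le_rfl).card_pos)
    (by
      intro t
      refine Nat.cast_le.2 (Finset.card_le_card fun i hi => ?_)
      simp only [Finset.mem_filter] at hi ⊢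
      exact ⟨hi.1, by omega⟩)
    (by
      intro a ha b hb
      -- A slice with more than `a` elements plus one with more than `b` has more than `a + b`.
      have hcd := cauchy_davenport_of_isAddTorsionFree (hlev a ha) (hlev b hb)
      have hsub : S.filter (fun i => a < f i) + S.filter (fun i => b < f i) ⊆
          K.filter (fun k => a + b < h k) := by
        intro z hz
        obtain ⟨i, hi, j, hj, rfl⟩ := Finset.mem_add.1 hz
        rw [Finset.mem_filter] at hi hj
        have hi1 : (A.filter (fun x => l x = i)).Nonempty := Finset.card_pos.1 ((hfpos i).1 hi.1)
        have hj1 : (A.filter (fun x => l x = j)).Nonempty := Finset.card_pos.1 ((hfpos j).1 hj.1)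
        have hss : A.filter (fun x => l x = i) + A.filter (fun x => l x = j) ⊆
            (A + A).filter (fun x => l x = i + j) := by
          intro w hw
          obtain ⟨x, hx, y, hy, rfl⟩ := Finset.mem_add.1 hw
          rw [Finset.mem_filter] at hx hy ⊢
          exact ⟨Finset.add_mem_add hx.1 hy.1, by rw [map_add, hx.2, hy.2]⟩
        have h1 : f i + f j - 1 ≤ h (i + j) :=
          (cauchy_davenport_of_isAddTorsionFree hi1 hj1).trans (Finset.card_le_card hss)
        have h2 : a + b < h (i + j) := by omega
        refine Finset.mem_filter.2 ⟨?_, h2⟩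
        obtain ⟨x, hx⟩ := (hi1.add hj1).mono hss
        exact Finset.mem_image.2 ⟨x, Finset.mem_filter.1 hx⟩
      have := Finset.card_le_card hsub
      omega)
  have hA' : (A.card : ℤ) = ∑ t ∈ Finset.range (m + 1),
      ((S.filter (fun i => t < f i)).card : ℤ) := by exact_mod_cast hA
  have hAA' : ∑ u ∈ Finset.range (m + 1 + m), ((K.filter (fun k => u < h k)).card : ℤ) ≤
      (A + A).card := by exact_mod_cast hAA
  omega

/-! ### A parallelepiped inside the set of permutations -/

/-- `Q` is a `k`-dimensional parallelepiped based at the origin such that `(0, 1, …, n - 1) + q` is, for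
each `q ∈ Q`, a permutation of `0, …, n - 1` that fixes all positions except the last `k + 1`. Such a
permutation is described here as an injective integer vector with entries in `[0, n)`. The edge added
in the step from `k` to `k + 1` turns the entry `j` at position `j = n - k - 2` into `n - 1` and
lowers all later entries by `1`, i.e. applies a cyclic permutation to the values `j, …, n - 1`. -/
lemma exists_cube (n : ℕ) : ∀ k, k + 1 ≤ n → ∃ Q : Finset (Fin n → ℤ),
    (∀ q ∈ Q, (Function.Injective fun i : Fin n => ((i : ℕ) : ℤ) + q i) ∧
      (∀ i : Fin n, 0 ≤ ((i : ℕ) : ℤ) + q i ∧ ((i : ℕ) : ℤ) + q i < n) ∧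
      ∀ i : Fin n, (i : ℕ) + k + 1 < n → q i = 0) ∧
    ∀ X Y : Finset (Fin n → ℤ),
      (2 : ℝ) ^ k * √((X.card : ℝ) * Y.card) ≤ ((X + Y + Q).card : ℝ) := by
  intro k
  induction k with
  | zero =>
    intro _
    refine ⟨{0}, ?_, ?_⟩
    · intro q hq
      rw [Finset.mem_singleton.1 hq]
      refine ⟨fun i j hij => ?_, fun i => ?_, fun i _ => rfl⟩
      · simp only [Pi.zero_apply, add_zero] at hij
        exact Fin.ext (by exact_mod_cast hij)
      · simp
    · intro X Y
      rcases X.eq_empty_or_nonempty with rfl | hX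
      · simp
      rcases Y.eq_empty_or_nonempty with rfl | hY
      · simp
      have h1 : (X.card : ℝ) ≤ (X + Y).card := by
        exact_mod_cast Finset.card_le_card_add_right hY
      have h2 : (Y.card : ℝ) ≤ (X + Y).card := by
        exact_mod_cast Finset.card_le_card_add_left hX
      have e : X + Y + {0} = X + Y := by rw [Finset.singleton_zero, add_zero]
      rw [pow_zero, one_mul, e]
      refine Real.sqrt_le_iff.2 ⟨by positivity, ?_⟩
      rw [sq]
      gcongr
  | succ k ih =>
    intro hk
    obtain ⟨Q, hQ, hcard⟩ := ih (by omega)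
    set j : Fin n := ⟨n - k - 2, by omega⟩ with hj
    have hjv : (j : ℕ) = n - k - 2 := rfl
    set v : Fin n → ℤ := fun i => if i < j then 0 else if i = j then (k : ℤ) + 1 else -1 with hv
    have hlt : ∀ i, i < j → v i = 0 := fun i hi => by simp [hv, hi]
    have hvj : v j = (k : ℤ) + 1 := by simp [hv]
    have hgt : ∀ i, j < i → v i = -1 := fun i hi => by simp [hv, hi.not_gt, hi.ne']
    refine ⟨{0, v} + Q, ?_, ?_⟩
    · intro q' hq'
      obtain ⟨w, hw, q, hq, rfl⟩ := Finset.mem_add.1 hq'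
      obtain ⟨hinj, hran, hfix⟩ := hQ q hq
      rcases Finset.mem_insert.1 hw with rfl | hw
      · rw [zero_add]
        exact ⟨hinj, hran, fun i hi => hfix i (by omega)⟩
      rw [Finset.mem_singleton.1 hw]
      have hle : ∀ i, i ≤ j → q i = 0 := fun i hi =>
        hfix i (by have : (i : ℕ) ≤ j := hi; omega)
      -- The values at positions after `j` exceed `j`, since `0, …, j` are already taken.
      have hbig : ∀ i, j < i → ((j : ℕ) : ℤ) < ((i : ℕ) : ℤ) + q i := by
        intro i hi
        by_contra hcon
        have h0 := (hran i).1
        obtain ⟨c, hc⟩ := Int.eq_ofNat_of_zero_le h0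
        have hcj : c ≤ (j : ℕ) := by omega
        have := hle ⟨c, hcj.trans_lt j.2⟩ hcj
        have heq : i = ⟨c, hcj.trans_lt j.2⟩ := hinj (by simp only [this, hc]; simp)
        have h1 : (i : ℕ) = c := congrArg Fin.val heq
        have h2 : (j : ℕ) < i := hi
        omega
      have hval : ∀ i : Fin n, ((i : ℕ) : ℤ) + (v + q) i =
          if i < j then ((i : ℕ) : ℤ) else if i = j then (n : ℤ) - 1
            else ((i : ℕ) : ℤ) + q i - 1 := by
        intro i
        rcases lt_trichotomy i j with h | h | h
        · simp [h, hlt i h, hle i h.le]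
        · simp only [h, Pi.add_apply, hvj, hle j le_rfl, lt_irrefl, if_false, if_true]
          omega
        · simp only [Pi.add_apply, hgt i h, h.not_gt, h.ne', if_false]
          ring
      refine ⟨fun a b hab => ?_, fun i => ?_, fun i hi => ?_⟩
      · simp only [hval] at hab
        have ra := hran a
        have rb := hran b
        have ba := hbig a
        have bb := hbig b
        rcases lt_trichotomy a j with ha | ha | ha <;> rcases lt_trichotomy b j with hb | hb | hb
        · simp only [ha, hb, if_true] at hab
          exact Fin.ext (by exact_mod_cast hab)
        · have ha' : (a : ℕ) < j := ha
          simp only [ha, hb, if_true, lt_irrefl, if_false] at hab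
          omega
        · have ha' : (a : ℕ) < j := ha
          have := bb hb
          simp only [ha, hb.not_gt, hb.ne', if_true, if_false] at hab
          omega
        · have hb' : (b : ℕ) < j := hb
          simp only [ha, hb, if_true, lt_irrefl, if_false] at hab
          omega
        · rw [ha, hb]
        · simp only [ha, hb.not_gt, hb.ne', if_true, lt_irrefl, if_false] at hab
          omega
        · have hb' : (b : ℕ) < j := hb
          have := ba ha
          simp only [hb, ha.not_gt, ha.ne', if_true, if_false] at hab
          omega
        · simp only [hb, ha.not_gt, ha.ne', if_true, lt_irrefl, if_false] at hab
          omega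
        · simp only [ha.not_gt, ha.ne', hb.not_gt, hb.ne', if_false] at hab
          exact hinj (by simpa using hab)
      · rw [hval]
        have ri := hran i
        rcases lt_trichotomy i j with h | h | h
        · have : (i : ℕ) < j := h
          simp only [h, if_true]
          omega
        · simp only [h, lt_irrefl, if_true, if_false]
          omega
        · have := hbig i h
          simp only [h.not_gt, h.ne', if_false]
          omega
      · have h : i < j := Fin.lt_def.2 (by omega)
        simp [hlt i h, hle i h.le]
    -- Evaluation at `j` vanishes on `Q`, and equals `k + 1 ≠ 0` on `v`.
    · have step := cube_step (Pi.evalAddMonoidHom (fun _ : Fin n => ℤ) j) (v := v)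
        (by simp only [Pi.evalAddMonoidHom_apply, hvj]; omega)
        (fun q hq => (hQ q hq).2.2 j (by omega)) (by positivity) hcard
      intro X Y
      rw [pow_succ, mul_comm ((2 : ℝ) ^ k)]
      exact step X Y

lemma exists_perm_of_injective {n : ℕ} {x : Fin n → ℤ} (hinj : Function.Injective x)
    (hran : ∀ i, 0 ≤ x i ∧ x i < n) : ∃ σ : Equiv.Perm (Fin n), ∀ i, ((σ i : ℕ) : ℤ) = x i := by
  choose y hy using fun i => Int.eq_ofNat_of_zero_le (hran i).1
  have hlt : ∀ i, y i < n := fun i => by have := (hran i).2; have := hy i; omega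
  have hinj' : Function.Injective fun i => (⟨y i, hlt i⟩ : Fin n) := by
    intro a b hab
    have : y a = y b := congrArg Fin.val hab
    exact hinj (by rw [hy, hy, this])
  exact ⟨Equiv.ofBijective _ (Finite.injective_iff_bijective.1 hinj'), fun i => (hy i).symm⟩

/-- The permutations of `{1, …, n}` force doubling at least `2^((n - 1) / 2)`. -/
lemma two_pow_mul_sq_card_le {n : ℕ} (hn : 1 ≤ n) {A : Finset (Fin n → ℤ)}
    (hA : ∀ σ : Equiv.Perm (Fin n), (fun i => ((σ i : ℕ) : ℤ) + 1) ∈ A) :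
    (2 : ℝ) ^ (n - 1) * (A.card : ℝ) ^ 2 ≤ ((A + A).card : ℝ) ^ 2 := by
  obtain ⟨Q, hQ, hcard⟩ := exists_cube n (n - 1) (by omega)
  refine sq_card_add_ge (Q := Q) (a := fun i => ((i : ℕ) : ℤ) + 1) ?_ ⟨_, hA 1⟩ ?_
  · intro X
    simpa using hcard X X
  · intro q hq
    obtain ⟨hinj, hran, -⟩ := hQ q hq
    obtain ⟨σ, hσ⟩ := exists_perm_of_injective hinj hran
    convert hA σ using 1
    funext i
    rw [hσ, Pi.add_apply]
    ring

lemma perm_point_injective (n : ℕ) : Function.Injective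
    fun (σ : Equiv.Perm (Fin n)) (i : Fin n) => ((σ i : ℕ) : ℤ) + 1 := by
  intro σ τ h
  ext i
  have := congrFun h i
  simp only at this
  omega

lemma factorial_le_card {n : ℕ} {A : Finset (Fin n → ℤ)}
    (hA : ∀ σ : Equiv.Perm (Fin n), (fun i => ((σ i : ℕ) : ℤ) + 1) ∈ A) :
    n.factorial ≤ A.card := by
  have hc : Fintype.card (Equiv.Perm (Fin n)) = n.factorial := by
    rw [Fintype.card_perm, Fintype.card_fin]
  rw [← hc, ← Finset.card_univ, ← Finset.card_image_of_injective _ (perm_point_injective n)]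
  refine Finset.card_le_card fun x hx => ?_
  obtain ⟨σ, -, rfl⟩ := Finset.mem_image.1 hx
  simpa using hA σ

/-! ### Numerical estimates and conclusion -/

lemma three_pow_le_factorial : ∀ m : ℕ, 2 ≤ m → 3 ^ m ≤ (2 * m).factorial := by
  intro m hm
  induction m, hm using Nat.le_induction with
  | base => decide
  | succ m hm ih =>
    rw [show 2 * (m + 1) = 2 * m + 1 + 1 by ring, Nat.factorial_succ, Nat.factorial_succ, pow_succ]
    calc 3 ^ m * 3 ≤ (2 * m).factorial * 3 := by gcongr
      _ ≤ (2 * m).factorial * ((2 * m + 1 + 1) * (2 * m + 1)) := by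
          gcongr
          nlinarith
      _ = (2 * m + 1 + 1) * ((2 * m + 1) * (2 * m).factorial) := by ring

lemma Cconst_nonneg (d : ℕ) : 0 ≤ Cconst d := by
  have h1 : ∀ k : ℕ, (1 : ℝ) ≤ 2 ^ k := fun k => one_le_pow₀ one_le_two
  unfold Cconst
  split_ifs
  · positivity
  · linarith [h1 (d / 2 + 1)]
  · linarith [h1 ((d - 1) / 2)]

lemma sq_Cconst_add_one_le {m : ℕ} (hm : 3 ≤ m) : (Cconst m + 1) ^ 2 ≤ 2 ^ (2 * m - 1) := by
  by_cases h5 : m ≤ 5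
  · interval_cases m <;> norm_num [Cconst]
  have hfour : ∀ k : ℕ, 3 ≤ k → (64 : ℝ) ≤ 4 ^ k := fun k hk => by
    calc (64 : ℝ) = 4 ^ 3 := by norm_num
      _ ≤ 4 ^ k := pow_le_pow_right₀ (by norm_num) hk
  have hsq : ∀ k : ℕ, ((2 : ℝ) ^ k) ^ 2 = 4 ^ k := fun k => by
    rw [← pow_mul, mul_comm, pow_mul]; norm_num
  rcases Nat.even_or_odd' m with ⟨k, rfl | rfl⟩
  · have hC : Cconst (2 * k) = 2 ^ (k + 1) - 1 := by
      simp [Cconst, h5]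
    have h4 := hfour k (by omega)
    have e : (2 : ℝ) ^ (2 * (2 * k) - 1) * 2 = 4 ^ k * 4 ^ k := by
      rw [← pow_succ, show 2 * (2 * k) - 1 + 1 = 2 * k + 2 * k by omega, pow_add, pow_mul]
      norm_num
    rw [hC, sub_add_cancel, hsq, pow_succ]
    nlinarith
  · have hC : Cconst (2 * k + 1) = 3 * 2 ^ k - 3 / 2 := by
      have : (2 * k + 1) % 2 ≠ 0 := by omega
      simp [Cconst, h5]
    have h4 := hfour k (by omega)
    have e : (2 : ℝ) ^ (2 * (2 * k + 1) - 1) = 2 * (4 ^ k * 4 ^ k) := by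
      rw [show 2 * (2 * k + 1) - 1 = 2 * k + 2 * k + 1 by omega, pow_succ, pow_add, pow_mul]
      norm_num
      ring
    have h2 := hsq k
    have hp : (0 : ℝ) < 2 ^ k := by positivity
    rw [hC, e]
    nlinarith

/-- If `A ⊂ ℤ^{2m}` is a finite set containing all points `(σ(1), …, σ(2m))`
for permutations `σ` of `{1, …, 2m}`, then `|A+A| ≥ C_m (|A| - 2^m) + 3^m`. -/
theorem stmt16 (m : ℕ) (hm : 1 ≤ m) (A : Finset (Fin (2 * m) → ℤ))
    (hA : ∀ σ : Equiv.Perm (Fin (2 * m)), (fun i => ((σ i : ℕ) : ℤ) + 1) ∈ A) :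
    ((A + A).card : ℝ) ≥ Cconst m * ((A.card : ℝ) - 2 ^ m) + 3 ^ m := by
  rcases (by omega : m = 1 ∨ m = 2 ∨ 3 ≤ m) with rfl | rfl | h3
  · have hne : A.Nonempty := ⟨_, hA 1⟩
    have h := cauchy_davenport_of_isAddTorsionFree hne hne
    have h' : (A.card : ℝ) + A.card ≤ (A + A).card + 1 := by exact_mod_cast (by omega)
    norm_num [Cconst]
    linarith
  -- The first coordinate takes all values `1, …, 4`, and the value `1` at six permutations.
  · set l := Pi.evalAddMonoidHom (fun _ : Fin (2 * 2) => ℤ) 0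
    have h1 : 4 ≤ (A.image l).card := by
      have hc : (Finset.univ.image
          fun σ : Equiv.Perm (Fin (2 * 2)) => ((σ 0 : ℕ) : ℤ) + 1).card = 4 := by decide
      rw [← hc]
      refine Finset.card_le_card fun x hx => ?_
      obtain ⟨σ, -, rfl⟩ := Finset.mem_image.1 hx
      exact Finset.mem_image.2 ⟨_, hA σ, rfl⟩
    have h2 : 4 ≤ (A.filter (fun x => l x = 1)).card := by
      have hc : (Finset.univ.filter
          fun σ : Equiv.Perm (Fin (2 * 2)) => σ 0 = 0).card = 6 := by decide
      rw [← Finset.card_image_of_injective _ (perm_point_injective _)] at hc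
      refine le_trans (by omega) (hc.symm.le.trans (Finset.card_le_card fun x hx => ?_))
      obtain ⟨σ, hσ, rfl⟩ := Finset.mem_image.1 hx
      refine Finset.mem_filter.2 ⟨hA σ, ?_⟩
      simp [l, (Finset.mem_filter.1 hσ).2]
    have h := three_mul_card_le l A h1 ⟨1, h2⟩
    have h' : 3 * (A.card : ℝ) ≤ (A + A).card + 3 := by exact_mod_cast h
    norm_num [Cconst]
    linarith
  -- `|A + A| ≥ (C_m + 1)|A|`, and the extra `|A|` absorbs the constant term `3^m`.
  · have hsq := two_pow_mul_sq_card_le (by omega) hA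
    have hC := Cconst_nonneg m
    have hcard : (3 : ℝ) ^ m ≤ A.card := by
      exact_mod_cast (three_pow_le_factorial m (by omega)).trans (factorial_le_card hA)
    have hb : (Cconst m + 1) * A.card ≤ (A + A).card := by
      refine le_of_sq_le_sq ?_ (Nat.cast_nonneg _)
      rw [mul_pow]
      refine le_trans ?_ hsq
      gcongr
      exact sq_Cconst_add_one_le h3
    have hpos : 0 ≤ Cconst m * 2 ^ m := by positivity
    nlinarith
end
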